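/- Let q > 3 be a prime and a ∈ 𝔽_q nonzero. Then there exists (α, β) ∈ 𝔽_q² with (α+β)^3 - 9αβ^2 = a. -/

import Mathlib

/-!
If `3 ∤ #F - 1`, cubing is bijective and `β = 0` suffices. Otherwise let `ζ` be a primitive cube
root of unity; then `(α + β)³ - 9αβ² = -(ζ² (α + ζ²β)³ + ζ (α + ζβ)³)`, so it is enough to solve
`ζ² u³ + ζ v³ = a`. If `ζ` is not a cube, then `a` is `1`, `ζ` or `ζ²` times a cube, and
`ζ² + ζ = -1` makes all three cases immediate.

If `ζ` is a cube, then `9 ∣ #F - 1`, so `#F ≥ 10`. For a character `χ` of order `n`, the sum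
`∑ i < n, χ(x) ^ i` is the number of `n`-th roots of `x`; hence the number of solutions of a
diagonal equation is `#F` plus a combination of Jacobi sums, each of absolute value at most `√#F`.
For `n = 3` it is at least `#F - 2 - 2 √#F`, which is positive.
-/

open Finset

section Powers

variable {F R : Type*} [Field F]

lemma exists_pow_eq_of_coprime_card_sub_one {n : ℕ} (hn : (Nat.card F - 1).Coprime n)
    (hn0 : n ≠ 0) (a : F) : ∃ t, t ^ n = a := by
  rcases eq_or_ne a 0 with rfl | ha
  · exact ⟨0, zero_pow hn0⟩
  rw [← Nat.card_units] at hn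
  obtain ⟨t, ht⟩ := (powCoprime hn).surjective (Units.mk0 a ha)
  exact ⟨t, by simpa using congrArg Units.val ht⟩

variable [Finite F] [CommRing R]

lemma exists_isPrimitiveRoot_of_prime_dvd_card_sub_one {p : ℕ} (hp : p.Prime)
    (hpF : p ∣ Nat.card F - 1) : ∃ ζ : F, IsPrimitiveRoot ζ p := by
  have := Fact.mk hp
  rw [← Nat.card_units] at hpF
  obtain ⟨ζ, hζ⟩ := exists_prime_orderOf_dvd_card' p hpF
  exact ⟨ζ, IsPrimitiveRoot.coe_units_iff.mpr (IsPrimitiveRoot.iff_orderOf.mpr hζ)⟩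

lemma sq_dvd_card_sub_one_of_isPrimitiveRoot_pow {p : ℕ} (hp : p.Prime) {t : F}
    (ht : IsPrimitiveRoot (t ^ p) p) : p ^ 2 ∣ Nat.card F - 1 := by
  have := Fact.mk hp
  have := Fintype.ofFinite F
  have ht0 : t ≠ 0 := by
    rintro rfl
    exact ht.ne_zero hp.ne_zero (zero_pow hp.ne_zero)
  have horder : orderOf t = p ^ 2 :=
    orderOf_eq_prime_pow (by simpa using ht.ne_one hp.one_lt)
      (by rw [pow_succ, pow_one, pow_mul, ht.pow_eq_one])
  rw [← horder, Nat.card_eq_fintype_card]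
  exact orderOf_dvd_of_pow_eq_one (FiniteField.pow_card_sub_one_eq_one t ht0)

lemma mulChar_apply_pow_orderOf_eq_one (χ : MulChar F R) {x : F} (hx : x ≠ 0) :
    χ x ^ orderOf χ = 1 := by
  rw [← χ.pow_apply' χ.orderOf_pos.ne', pow_orderOf_eq_one, MulChar.one_apply hx.isUnit]

lemma norm_mulChar_apply_le_one (χ : MulChar F ℂ) (x : F) : ‖χ x‖ ≤ 1 := by
  rcases eq_or_ne x 0 with rfl | hx
  · simp [MulChar.map_zero]
  · exact (Complex.norm_eq_one_of_pow_eq_one (mulChar_apply_pow_orderOf_eq_one χ hx)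
      χ.orderOf_pos.ne').le

lemma exists_pow_orderOf_eq_of_mulChar_apply_eq_one {χ : MulChar F R} {x : F} (hx : χ x = 1) :
    ∃ y, y ^ orderOf χ = x := by
  rcases eq_or_ne x 0 with rfl | hx0
  · exact ⟨0, zero_pow χ.orderOf_pos.ne'⟩
  obtain ⟨g, hg⟩ := IsCyclic.exists_monoid_generator (α := Fˣ)
  obtain ⟨k, hk⟩ := Submonoid.mem_powers_iff _ _ |>.mp (hg (Units.mk0 x hx0))
  have hgk : (g : F) ^ k = x := by simpa using congrArg Units.val hk
  have hχk : χ ^ k = 1 := by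
    rw [MulChar.eq_iff fun y ↦ Submonoid.powers_le_zpowers _ (hg y), MulChar.pow_apply_coe,
      ← map_pow, hgk, hx, MulChar.one_apply_coe]
  obtain ⟨m, rfl⟩ := orderOf_dvd_of_pow_eq_one hχk
  exact ⟨(g : F) ^ m, by rw [← pow_mul, mul_comm, hgk]⟩

lemma geom_sum_mulChar_apply_mul (χ : MulChar F R) (a x : F) :
    ∑ i ∈ range (orderOf χ), χ (a * x) ^ i =
      1 + ∑ i ∈ Ico 1 (orderOf χ), χ a ^ i * (χ ^ i) x := by
  rw [sum_range_eq_add_Ico _ χ.orderOf_pos, pow_zero]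
  congr 1
  refine sum_congr rfl fun i hi ↦ ?_
  rw [χ.pow_apply' (Nat.one_le_iff_ne_zero.mp (mem_Ico.mp hi).1), map_mul, mul_pow]

lemma exists_pow_orderOf_eq_of_geom_sum_ne_zero [IsDomain R] {χ : MulChar F R} {x : F}
    (hx : ∑ i ∈ range (orderOf χ), χ x ^ i ≠ 0) : ∃ y, y ^ orderOf χ = x := by
  rcases eq_or_ne x 0 with rfl | hx0
  · exact ⟨0, zero_pow χ.orderOf_pos.ne'⟩
  have hgeom : (χ x - 1) * ∑ i ∈ range (orderOf χ), χ x ^ i = 0 := by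
    rw [mul_geom_sum, mulChar_apply_pow_orderOf_eq_one χ hx0, sub_self]
  exact exists_pow_orderOf_eq_of_mulChar_apply_eq_one
    (sub_eq_zero.mp ((mul_eq_zero.mp hgeom).resolve_right hx))

lemma exists_eq_pow_mul_pow_of_forall_pow_ne {p : ℕ} (hp : p.Prime) {g : F}
    (hg : ∀ t, t ^ p ≠ g) (x : F) : ∃ i < p, ∃ t, x = g ^ i * t ^ p := by
  have := Fintype.ofFinite F
  have := Fact.mk hp
  rcases eq_or_ne x 0 with rfl | hx0
  · exact ⟨0, hp.pos, 0, by simp [hp.ne_zero]⟩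
  have hg0 : g ≠ 0 := by
    rintro rfl
    exact hg 0 (zero_pow hp.ne_zero)
  have hpF : p ∣ Fintype.card F - 1 := by
    rw [← Nat.card_eq_fintype_card, hp.dvd_iff_not_coprime, Nat.coprime_comm]
    intro hcoprime
    obtain ⟨t, ht⟩ := exists_pow_eq_of_coprime_card_sub_one hcoprime hp.ne_zero g
    exact hg t ht
  obtain ⟨χ, rfl⟩ :=
    MulChar.exists_mulChar_orderOf F hpF (Complex.isPrimitiveRoot_exp p hp.ne_zero)
  have hχg : IsPrimitiveRoot (χ g) (orderOf χ) := by
    refine IsPrimitiveRoot.iff_orderOf.mpr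
      (orderOf_eq_prime (mulChar_apply_pow_orderOf_eq_one χ hg0) fun h ↦ ?_)
    obtain ⟨t, ht⟩ := exists_pow_orderOf_eq_of_mulChar_apply_eq_one h
    exact hg t ht
  obtain ⟨i, hi, hχx⟩ := MulChar.exists_apply_eq_pow (pow_orderOf_eq_one χ) hχg hx0
  have hquot : χ (x / g ^ i) = 1 := by
    apply mul_right_cancel₀ (pow_ne_zero i (hχg.ne_zero hp.ne_zero))
    rw [← map_pow, ← map_mul, div_mul_cancel₀ _ (pow_ne_zero i hg0), hχx, map_pow, one_mul]
  obtain ⟨t, ht⟩ := exists_pow_orderOf_eq_of_mulChar_apply_eq_one hquot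
  exact ⟨i, hi, t, by rw [ht, mul_div_cancel₀ _ (pow_ne_zero i hg0)]⟩

end Powers

section JacobiSum

variable {F R : Type*} [Field F] [Fintype F] [CommRing R]

/-- The exponents `i = 0` and `j = 0` contribute `#F` and nothing else, because `χ 0 ^ 0 = 1` and
nontrivial characters sum to zero. -/
lemma sum_geom_sum_mul_geom_sum_eq_card_add [IsDomain R] (χ : MulChar F R) (a b : F) :
    ∑ x, (∑ i ∈ range (orderOf χ), χ (a * x) ^ i) * ∑ j ∈ range (orderOf χ), χ (b * (1 - x)) ^ j =
      Fintype.card F + ∑ i ∈ Ico 1 (orderOf χ), ∑ j ∈ Ico 1 (orderOf χ),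
        χ a ^ i * χ b ^ j * jacobiSum (χ ^ i) (χ ^ j) := by
  have hsum (c : F) : ∑ x, ∑ i ∈ Ico 1 (orderOf χ), χ c ^ i * (χ ^ i) x = 0 := by
    rw [sum_comm]
    refine sum_eq_zero fun i hi ↦ ?_
    rw [mem_Ico] at hi
    rw [← mul_sum, MulChar.sum_eq_zero_of_ne_one
      (pow_ne_one_of_lt_orderOf (Nat.one_le_iff_ne_zero.mp hi.1) hi.2), mul_zero]
  have hsum' : ∑ x, ∑ i ∈ Ico 1 (orderOf χ), χ b ^ i * (χ ^ i) (1 - x) = 0 :=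
    ((Equiv.subLeft (1 : F)).sum_comp fun x ↦ ∑ i ∈ Ico 1 (orderOf χ), χ b ^ i * (χ ^ i) x).trans
      (hsum b)
  have hprod : ∑ x, (∑ i ∈ Ico 1 (orderOf χ), χ a ^ i * (χ ^ i) x) *
        ∑ j ∈ Ico 1 (orderOf χ), χ b ^ j * (χ ^ j) (1 - x) =
      ∑ i ∈ Ico 1 (orderOf χ), ∑ j ∈ Ico 1 (orderOf χ),
        χ a ^ i * χ b ^ j * jacobiSum (χ ^ i) (χ ^ j) := by
    simp_rw [sum_mul_sum, jacobiSum, mul_sum, mul_mul_mul_comm]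
    rw [sum_comm]
    exact sum_congr rfl fun i _ ↦ sum_comm
  simp only [geom_sum_mulChar_apply_mul, add_mul, mul_add, one_mul, mul_one, sum_add_distrib,
    hsum, hsum', hprod, add_zero, zero_add, sum_const, card_univ, nsmul_eq_mul]

lemma norm_jacobiSum_inv_le_one {χ : MulChar F ℂ} (hχ : χ ≠ 1) : ‖jacobiSum χ χ⁻¹‖ ≤ 1 := by
  rw [jacobiSum_nontrivial_inv hχ, norm_neg]
  exact norm_mulChar_apply_le_one χ (-1)

lemma norm_jacobiSum_eq_sqrt_card {χ ψ : MulChar F ℂ} (hχ : χ ≠ 1) (hψ : ψ ≠ 1)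
    (hχψ : χ * ψ ≠ 1) : ‖jacobiSum χ ψ‖ = √(Fintype.card F) := by
  have hconj : jacobiSum χ⁻¹ ψ⁻¹ = star (jacobiSum χ ψ) := by
    simp only [jacobiSum, star_sum, star_mul', MulChar.star_apply']
  have hchar : ringChar ℂ ≠ ringChar F := by
    rw [ringChar.eq_zero]
    exact (CharP.ringChar_ne_zero_of_finite F).symm
  have hmul := jacobiSum_mul_jacobiSum_inv hchar hχ hψ hχψ
  rw [hconj, Complex.star_def, Complex.mul_conj'] at hmul
  rw [eq_comm, Real.sqrt_eq_iff_eq_sq (Nat.cast_nonneg _) (norm_nonneg _)]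
  exact_mod_cast hmul.symm

lemma sum_norm_jacobiSum_pow_le (χ : MulChar F ℂ) {i : ℕ} (hi : i ∈ Ico 1 (orderOf χ)) :
    ∑ j ∈ Ico 1 (orderOf χ), ‖jacobiSum (χ ^ i) (χ ^ j)‖ ≤
      1 + (orderOf χ - 2) * √(Fintype.card F) := by
  have hpow_ne_one {k : ℕ} (hk : k ∈ Ico 1 (orderOf χ)) : χ ^ k ≠ 1 := by
    rw [mem_Ico] at hk
    exact pow_ne_one_of_lt_orderOf (Nat.one_le_iff_ne_zero.mp hk.1) hk.2
  have hi' := mem_Ico.mp hi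
  have hinv : χ ^ (orderOf χ - i) = (χ ^ i)⁻¹ := by
    rw [pow_sub χ hi'.2.le, pow_orderOf_eq_one, one_mul]
  have hcompl : orderOf χ - i ∈ Ico 1 (orderOf χ) := by
    rw [mem_Ico]
    lia
  have hrest : ∀ j ∈ (Ico 1 (orderOf χ)).erase (orderOf χ - i),
      ‖jacobiSum (χ ^ i) (χ ^ j)‖ = √(Fintype.card F) := by
    intro j hj
    obtain ⟨hne, hj⟩ := mem_erase.mp hj
    refine norm_jacobiSum_eq_sqrt_card (hpow_ne_one hi) (hpow_ne_one hj) fun h ↦ hne ?_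
    rw [← pow_add] at h
    have hj' := mem_Ico.mp hj
    have := Nat.eq_of_dvd_of_lt_two_mul (by lia) (orderOf_dvd_of_pow_eq_one h) (by lia)
    lia
  have hcard : (#((Ico 1 (orderOf χ)).erase (orderOf χ - i)) : ℝ) = orderOf χ - 2 := by
    rw [card_erase_of_mem hcompl, Nat.card_Ico, Nat.sub_sub, Nat.cast_sub (by lia)]
    norm_num
  rw [← add_sum_erase _ _ hcompl, hinv, sum_congr rfl hrest, sum_const, nsmul_eq_mul, hcard]
  gcongr
  exact norm_jacobiSum_inv_le_one (hpow_ne_one hi)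

lemma norm_sum_sum_apply_pow_mul_jacobiSum_le (χ : MulChar F ℂ) (a b : F) :
    ‖∑ i ∈ Ico 1 (orderOf χ), ∑ j ∈ Ico 1 (orderOf χ),
        χ a ^ i * χ b ^ j * jacobiSum (χ ^ i) (χ ^ j)‖ ≤
      (orderOf χ - 1) * (1 + (orderOf χ - 2) * √(Fintype.card F)) := by
  have hterm (i j : ℕ) : ‖χ a ^ i * χ b ^ j * jacobiSum (χ ^ i) (χ ^ j)‖ ≤
      ‖jacobiSum (χ ^ i) (χ ^ j)‖ := by
    rw [norm_mul, norm_mul, norm_pow, norm_pow]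
    exact mul_le_of_le_one_left (norm_nonneg _) <|
      mul_le_one₀ (pow_le_one₀ (norm_nonneg _) (norm_mulChar_apply_le_one χ a)) (by positivity)
        (pow_le_one₀ (norm_nonneg _) (norm_mulChar_apply_le_one χ b))
  calc _ ≤ ∑ i ∈ Ico 1 (orderOf χ), ∑ j ∈ Ico 1 (orderOf χ), ‖jacobiSum (χ ^ i) (χ ^ j)‖ :=
        norm_sum_le_of_le _ fun i _ ↦ norm_sum_le_of_le _ fun j _ ↦ hterm i j
    _ ≤ ∑ i ∈ Ico 1 (orderOf χ), (1 + (orderOf χ - 2) * √(Fintype.card F)) :=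
        sum_le_sum fun i hi ↦ sum_norm_jacobiSum_pow_le χ hi
    _ = _ := by rw [sum_const, Nat.card_Ico, nsmul_eq_mul, Nat.cast_sub χ.orderOf_pos, Nat.cast_one]

theorem exists_mul_pow_add_mul_pow_eq {n : ℕ} (hn : n ∣ Fintype.card F - 1)
    (hcard : (n - 1) * (1 + (n - 2) * √(Fintype.card F)) < Fintype.card F)
    {a b : F} (ha : a ≠ 0) (hb : b ≠ 0) (c : F) : ∃ x y, a * x ^ n + b * y ^ n = c := by
  have hn0 : n ≠ 0 := by
    rintro rfl
    exact (Nat.sub_pos_of_lt Fintype.one_lt_card).ne' (Nat.eq_zero_of_zero_dvd hn)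
  obtain ⟨χ, rfl⟩ := MulChar.exists_mulChar_orderOf F hn (Complex.isPrimitiveRoot_exp n hn0)
  by_contra! hne
  have hzero (x : F) : (∑ i ∈ range (orderOf χ), χ (c / a * x) ^ i) *
      ∑ j ∈ range (orderOf χ), χ (c / b * (1 - x)) ^ j = 0 := by
    by_contra hmul
    obtain ⟨hx, hy⟩ := mul_ne_zero_iff.mp hmul
    obtain ⟨u, hu⟩ := exists_pow_orderOf_eq_of_geom_sum_ne_zero hx
    obtain ⟨v, hv⟩ := exists_pow_orderOf_eq_of_geom_sum_ne_zero hy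
    apply hne u v
    rw [hu, hv]
    field_simp
    ring
  have hsum := sum_geom_sum_mul_geom_sum_eq_card_add χ (c / a) (c / b)
  rw [sum_eq_zero fun x _ ↦ hzero x, eq_comm, add_eq_zero_iff_eq_neg] at hsum
  refine (norm_sum_sum_apply_pow_mul_jacobiSum_le χ (c / a) (c / b)).not_gt ?_
  rwa [← norm_neg, ← hsum, Complex.norm_natCast]

end JacobiSum

section CubicForm

section Domain

variable {R : Type*} [CommRing R] [IsDomain R] {ζ : R}

lemma sq_add_self_of_isPrimitiveRoot_three (hζ : IsPrimitiveRoot ζ 3) : ζ ^ 2 + ζ = -1 := by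
  have h := hζ.geom_sum_eq_zero (by norm_num)
  simp only [sum_range_succ, sum_range_zero] at h
  linear_combination h

lemma add_cube_sub_nine_mul_eq_neg (hζ : IsPrimitiveRoot ζ 3) (α β : R) :
    (α + β) ^ 3 - 9 * α * β ^ 2 =
      -(ζ ^ 2 * (α + ζ ^ 2 * β) ^ 3 + ζ * (α + ζ * β) ^ 3) := by
  linear_combination (α ^ 3 + 3 * (ζ ^ 2 - ζ + 1) * α ^ 2 * β
    + 3 * (ζ - 1) * (ζ ^ 3 + 2) * α * β ^ 2
    + (ζ ^ 2 - ζ + 1) * (ζ ^ 4 - ζ ^ 2 + 1) * β ^ 3) * sq_add_self_of_isPrimitiveRoot_three hζ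

end Domain

variable {F : Type*} [Field F] {ζ : F}

lemma exists_add_cube_sub_nine_mul_eq (hζ : IsPrimitiveRoot ζ 3) (u v : F) :
    ∃ α β, (α + β) ^ 3 - 9 * α * β ^ 2 = ζ ^ 2 * u ^ 3 + ζ * v ^ 3 := by
  have hdisc : ζ - ζ ^ 2 ≠ 0 := by
    rw [show ζ - ζ ^ 2 = ζ * (1 - ζ) by ring]
    exact mul_ne_zero (hζ.ne_zero (by norm_num)) (sub_ne_zero.mpr (hζ.ne_one (by norm_num)).symm)
  obtain ⟨β, hβ⟩ : ∃ β, (ζ - ζ ^ 2) * β = u - v := ⟨_, mul_div_cancel₀ _ hdisc⟩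
  refine ⟨-v - ζ * β, β, ?_⟩
  have hu : -v - ζ * β + ζ ^ 2 * β = -u := by linear_combination -hβ
  rw [add_cube_sub_nine_mul_eq_neg hζ, hu, sub_add_cancel]
  ring

lemma exists_sq_mul_cube_add_mul_cube_eq [Finite F] (hζ : IsPrimitiveRoot ζ 3) (a : F) :
    ∃ u v, ζ ^ 2 * u ^ 3 + ζ * v ^ 3 = a := by
  by_cases hcube : ∃ t, t ^ 3 = ζ
  · obtain ⟨t, rfl⟩ := hcube
    have := Fintype.ofFinite F
    have h9 := sq_dvd_card_sub_one_of_isPrimitiveRoot_pow Nat.prime_three hζ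
    rw [Nat.card_eq_fintype_card] at h9
    have hten : (10 : ℝ) ≤ Fintype.card F := by
      have := Nat.le_of_dvd (Nat.sub_pos_of_lt Fintype.one_lt_card) h9
      exact_mod_cast (by lia : 10 ≤ Fintype.card F)
    have hζ0 := hζ.ne_zero (by norm_num)
    refine exists_mul_pow_add_mul_pow_eq (dvd_trans (by norm_num) h9) ?_
      (pow_ne_zero 2 hζ0) hζ0 a
    have hsq := Real.sq_sqrt (Nat.cast_nonneg (α := ℝ) (Fintype.card F))
    have hsqrt : 3 ≤ √(Fintype.card F) := Real.le_sqrt_of_sq_le (by linarith)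
    push_cast
    nlinarith
  · push Not at hcube
    obtain ⟨i, hi, t, rfl⟩ := exists_eq_pow_mul_pow_of_forall_pow_ne Nat.prime_three hcube a
    interval_cases i
    · exact ⟨-t, -t, by linear_combination -t ^ 3 * sq_add_self_of_isPrimitiveRoot_three hζ⟩
    · exact ⟨0, t, by ring⟩
    · exact ⟨t, 0, by ring⟩

end CubicForm

theorem stmt_6_general {F : Type*} [Field F] [Finite F] (a : F) :
    ∃ α β : F, (α + β) ^ 3 - 9 * α * β ^ 2 = a := by
  rcases Nat.coprime_or_dvd_of_prime Nat.prime_three (Nat.card F - 1) with hcoprime | hdvd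
  · obtain ⟨t, rfl⟩ := exists_pow_eq_of_coprime_card_sub_one hcoprime.symm three_ne_zero a
    exact ⟨t, 0, by ring⟩
  · obtain ⟨ζ, hζ⟩ := exists_isPrimitiveRoot_of_prime_dvd_card_sub_one Nat.prime_three hdvd
    obtain ⟨u, v, rfl⟩ := exists_sq_mul_cube_add_mul_cube_eq hζ a
    exact exists_add_cube_sub_nine_mul_eq hζ u v

theorem stmt_6 (q : ℕ) (hq : q.Prime) (hq3 : 3 < q) (a : ZMod q) (ha : a ≠ 0) :
    ∃ α β : ZMod q, (α + β)^3 - 9*α*β^2 = a :=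
  have := Fact.mk hq
  stmt_6_general a
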